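/- There exists a universal constant C > 0 such that the following holds. Let d ≥ 1, T ≥ max(d, 2), α ∈ [1, 2], and let y_1,…,y_T ∈ {1,…,d} be any outcome sequence. Let c_{j,t} = #{s ≤ t : y_s = j}, let the FTRL predictions with loss-based regularization and η = 1 be (p_t)_j = (c_{j,t−1} + 1)/(t − 1 + d) for t = 1,…,T, and let p̄_T = (1/T) Σ_{t=1}^T e_{y_t}. Then Σ_{t=1}^T ℓ_α(p_t, y_t) − Σ_{t=1}^T ℓ_α(p̄_T, y_t) ≤ C (d + d^{2−α} log T). -/

import Mathlib

open scoped BigOperators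

/-- The unscaled α-Tsallis loss: for `α ∈ (1, 2]`,
`ℓ_α(p, y) = (1/(1−α))(α p_y^{α−1} − 1) + ∑_j p_j^α`, and for `α = 1` it is the log loss
`ℓ_1(p, y) = −log p_y`. -/
noncomputable def tsallisLoss {d : ℕ} (α : ℝ) (p : Fin d → ℝ) (y : Fin d) : ℝ :=
  if α = 1 then -Real.log (p y)
  else (1 / (1 - α)) * (α * p y ^ (α - 1) - 1) + ∑ j, p j ^ α

/-! Write `α = 1 + a`. With the deformed logarithm `L_a x = (x ^ a - 1) / a`, `L_0 = log`, all
losses with `α ∈ [1, 2]` take the form `∑ i, p_i ^ (1 + a) - 1 - (1 + a) L_a(p_y)` on the simplex,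
so log loss needs no separate argument. These losses are proper, hence the predictions follow the
leader for the cumulative loss plus the regularizer `∑ j, ℓ(p, j)`, and playing one step ahead costs
at most the difference of the optimal values. That difference is compared with the loss of the
empirical frequencies coordinate by coordinate. The remaining one-step stability error in round `t`
is of order `(c / N) ^ a / c + 1 / N`, with `c = c_{y_t,t-1} + 1` and `N = t - 1 + d`; the weighted
AM-GM inequality bounds its first term by `d ^ (1 - a) ((1 - a) / (d c) + a / N)`, and both
`1 / (d c)` and `1 / N` sum to at most `1 + log T` over the rounds.
-/

namespace TsallisRegret

open Finset

section DeformedLog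

variable {a x y : ℝ}

/-- The deformed logarithm `(x ^ a - 1) / a` of Tsallis statistics, through which the Tsallis losses
are analysed; at `a = 0` it is its limit `log x`. In the usual notation it is `ln_q` with
`q = 1 - a`. -/
noncomputable def deformedLog (a x : ℝ) : ℝ :=
  if a = 0 then Real.log x else (x ^ a - 1) / a

lemma mul_deformedLog (a x : ℝ) : a * deformedLog a x = x ^ a - 1 := by
  rcases eq_or_ne a 0 with rfl | ha
  · simp
  · rw [deformedLog, if_neg ha, mul_div_cancel₀ _ ha]

lemma deformedLog_mul (a : ℝ) (hx : 0 < x) (hy : 0 < y) :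
    deformedLog a (x * y) = deformedLog a x + x ^ a * deformedLog a y := by
  unfold deformedLog
  split_ifs with ha
  · rw [ha, Real.rpow_zero, one_mul, Real.log_mul hx.ne' hy.ne']
  · rw [Real.mul_rpow hx.le hy.le]
    ring

lemma log_le_deformedLog (ha : 0 ≤ a) (hx : 0 < x) : Real.log x ≤ deformedLog a x := by
  unfold deformedLog
  split_ifs with h
  · rfl
  · rw [le_div_iff₀ (ha.lt_of_ne' h), Real.rpow_def_of_pos hx]
    linarith [Real.add_one_le_exp (Real.log x * a)]

lemma deformedLog_le_sub_one (ha₀ : 0 ≤ a) (ha₁ : a ≤ 1) (hx : 0 < x) :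
    deformedLog a x ≤ x - 1 := by
  unfold deformedLog
  split_ifs with h
  · exact Real.log_le_sub_one_of_pos hx
  · have bernoulli : (1 + (x - 1)) ^ a ≤ 1 + a * (x - 1) :=
      rpow_one_add_le_one_add_mul_self (by linarith) ha₀ ha₁
    rw [add_sub_cancel] at bernoulli
    rw [div_le_iff₀ (ha₀.lt_of_ne' h)]
    linarith

lemma deformedLog_sub_deformedLog_mul_le (ha : 0 ≤ a) (hx : 0 < x) (hy : 0 < y) :
    deformedLog a x - deformedLog a (x * y) ≤ x ^ a * Real.log y⁻¹ := by
  have h := mul_le_mul_of_nonneg_left (log_le_deformedLog ha hy) (Real.rpow_nonneg hx.le a)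
  rw [deformedLog_mul a hx hy, Real.log_inv]
  linarith

lemma deformedLog_le_deformedLog (ha : 0 ≤ a) (hx : 0 < x) (hxy : x ≤ y) :
    deformedLog a x ≤ deformedLog a y := by
  have hratio : 1 ≤ y / x := (one_le_div hx).2 hxy
  have hlog : Real.log (y / x)⁻¹ ≤ 0 := by
    rw [Real.log_inv]
    exact neg_nonpos.2 (Real.log_nonneg hratio)
  have h := deformedLog_sub_deformedLog_mul_le ha hx (one_pos.trans_le hratio)
  rw [mul_div_cancel₀ y hx.ne'] at h
  linarith [mul_nonpos_of_nonneg_of_nonpos (Real.rpow_nonneg hx.le a) hlog]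

lemma rpow_one_add_eq_mul_deformedLog (ha : 0 ≤ a) (hx : 0 ≤ x) :
    x ^ (1 + a) = x + a * (x * deformedLog a x) := by
  rw [Real.rpow_add' hx (by linarith), Real.rpow_one]
  linear_combination -x * mul_deformedLog a x

/-- The left side is the tangent line of the convex function `x ↦ x * deformedLog a x` at `y`. -/
lemma mul_deformedLog_tangent_le (ha : 0 ≤ a) (hx : 0 ≤ x) (hy : 0 < y) :
    x * ((1 + a) * deformedLog a y + 1) - y ^ (1 + a) ≤ x * deformedLog a x := by
  rcases hx.eq_or_lt with rfl | hx
  · linarith [Real.rpow_nonneg hy.le (1 + a)]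
  · have hsplit : deformedLog a x = deformedLog a y + y ^ a * deformedLog a (x / y) := by
      rw [← deformedLog_mul a hy (by positivity), mul_div_cancel₀ x hy.ne']
    have hlower : 1 - (x / y)⁻¹ ≤ deformedLog a (x / y) :=
      (Real.one_sub_inv_le_log_of_pos (by positivity)).trans
        (log_le_deformedLog ha (by positivity))
    have hscaled : y ^ a * (x - y) ≤ x * (y ^ a * deformedLog a (x / y)) :=
      calc y ^ a * (x - y) = x * (y ^ a * (1 - (x / y)⁻¹)) := by field_simp
        _ ≤ x * (y ^ a * deformedLog a (x / y)) := by gcongr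
    rw [hsplit, mul_add, rpow_one_add_eq_mul_deformedLog ha hy.le]
    linear_combination hscaled + (x - y) * mul_deformedLog a y

end DeformedLog

section Score

variable {ι : Type*} [Fintype ι] {a : ℝ} {p q : ι → ℝ}

/-- The Tsallis loss of order `1 + a` in terms of the deformed logarithm, for outcomes in any finite
type. On the simplex it agrees with `tsallisLoss (1 + a)`, for `a = 0` included. -/
noncomputable def score (a : ℝ) (p : ι → ℝ) (j : ι) : ℝ :=
  ∑ i, p i ^ (1 + a) - 1 - (1 + a) * deformedLog a (p j)

lemma tsallisLoss_eq_score {d : ℕ} {p : Fin d → ℝ} (α : ℝ) (hp : ∑ i, p i = 1) (j : Fin d) :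
    tsallisLoss α p j = score (α - 1) p j := by
  unfold tsallisLoss score deformedLog
  rcases eq_or_ne α 1 with rfl | hα
  · simp [hp]
  · have hα' : α - 1 ≠ 0 := sub_ne_zero.2 hα
    rw [if_neg hα, if_neg hα', add_sub_cancel, ← neg_sub α 1]
    field_simp
    ring

lemma sum_mul_score (a : ℝ) (p : ι → ℝ) (hq : ∑ j, q j = 1) :
    ∑ j, q j * score a p j =
      ∑ i, p i ^ (1 + a) - 1 - (1 + a) * ∑ j, q j * deformedLog a (p j) := by
  simp only [score, mul_sub _ _ ((1 + a) * _), sum_sub_distrib, ← sum_mul, hq, one_mul, mul_sum,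
    mul_left_comm]

lemma sum_mul_score_self (ha : 0 ≤ a) (hp : ∀ j, 0 ≤ p j) (hsum : ∑ j, p j = 1) :
    ∑ j, p j * score a p j = -∑ j, p j * deformedLog a (p j) := by
  have hpow : ∑ j, p j ^ (1 + a) = 1 + a * ∑ j, p j * deformedLog a (p j) := by
    simp only [rpow_one_add_eq_mul_deformedLog ha (hp _), sum_add_distrib, hsum, mul_sum]
  rw [sum_mul_score a p hsum, hpow]
  ring

theorem score_proper (ha : 0 ≤ a) (hq : ∀ j, 0 ≤ q j) (hsum : ∑ j, q j = 1) (hp : ∀ j, 0 < p j) :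
    ∑ j, q j * score a q j ≤ ∑ j, q j * score a p j := by
  have htangent : ∑ j, (q j * ((1 + a) * deformedLog a (p j) + 1) - p j ^ (1 + a)) ≤
      ∑ j, q j * deformedLog a (q j) :=
    sum_le_sum fun j _ => mul_deformedLog_tangent_le ha (hq j) (hp j)
  simp only [sum_sub_distrib, mul_add, mul_one, sum_add_distrib, hsum,
    mul_left_comm _ (1 + a)] at htangent
  rw [sum_mul_score_self ha hq hsum, sum_mul_score a p hsum, mul_sum]
  linarith

lemma sum_rpow_sub_sum_rpow_le {b ε : ℝ} (hb : 1 ≤ b) (hε₀ : 0 ≤ ε) (hε₁ : ε ≤ 1)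
    (hp : ∀ j, 0 ≤ p j) (hsum : ∑ j, p j = 1) (hpq : ∀ j, (1 - ε) * p j ≤ q j) :
    ∑ j, p j ^ b - ∑ j, q j ^ b ≤ b * ε := by
  have bernoulli : 1 - b * ε ≤ (1 - ε) ^ b := by
    simpa [sub_eq_add_neg] using one_add_mul_self_le_rpow_one_add (s := -ε) (by linarith) hb
  have hterm (j : ι) : p j ^ b - q j ^ b ≤ b * ε * p j := by
    have hle_one : p j ≤ 1 := hsum ▸ single_le_sum (fun i _ => hp i) (mem_univ j)
    have hpow_le : p j ^ b ≤ p j := Real.rpow_le_self_of_le_one (hp j) hle_one hb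
    have hshrunk : (1 - b * ε) * p j ^ b ≤ q j ^ b :=
      calc (1 - b * ε) * p j ^ b ≤ (1 - ε) ^ b * p j ^ b := by
            gcongr
            exact Real.rpow_nonneg (hp j) b
        _ = ((1 - ε) * p j) ^ b := (Real.mul_rpow (by linarith) (hp j)).symm
        _ ≤ q j ^ b := by
            gcongr
            · exact mul_nonneg (by linarith) (hp j)
            · exact hpq j
    linarith [mul_le_mul_of_nonneg_left hpow_le (show 0 ≤ b * ε by positivity)]
  calc ∑ j, p j ^ b - ∑ j, q j ^ b ≤ ∑ j, b * ε * p j := by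
        rw [← sum_sub_distrib]
        exact sum_le_sum fun j _ => hterm j
    _ = b * ε := by rw [← mul_sum, hsum, mul_one]

end Score

theorem be_the_regularized_leader {X : Type*} (R : X → ℝ) (f : ℕ → X → ℝ) (x : ℕ → X)
    (hx : ∀ t, R (x t) + ∑ s ∈ range t, f s (x t) ≤
      R (x (t + 1)) + ∑ s ∈ range t, f s (x (t + 1))) (T : ℕ) :
    ∑ t ∈ range T, f t (x (t + 1)) ≤ R (x T) + ∑ s ∈ range T, f s (x T) - R (x 0) := by
  induction T with
  | zero => simp
  | succ t ih =>
    rw [sum_range_succ, sum_range_succ]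
    linarith [hx t]

lemma sum_range_inv_add_one_le {n T : ℕ} (hn : n ≤ T) :
    ∑ k ∈ range n, ((k : ℝ) + 1)⁻¹ ≤ 1 + Real.log T :=
  calc ∑ k ∈ range n, ((k : ℝ) + 1)⁻¹ ≤ ∑ k ∈ range T, ((k : ℝ) + 1)⁻¹ :=
        sum_le_sum_of_subset_of_nonneg (range_mono hn) fun _ _ _ => by positivity
    _ = (harmonic T : ℝ) := by simp [harmonic]
    _ ≤ 1 + Real.log T := harmonic_le_one_add_log T

section Frequencies

variable {ι : Type*} [DecidableEq ι] (y : ℕ → ι)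

/-- The empirical frequencies `p̄_t` of the first `t` outcomes, the comparator of the regret. -/
noncomputable def empiricalFreq (t : ℕ) (j : ι) : ℝ :=
  Nat.count (y · = j) t / t

lemma empiricalFreq_nonneg (t : ℕ) (j : ι) : 0 ≤ empiricalFreq y t j := by
  unfold empiricalFreq
  positivity

lemma empiricalFreq_le_one (t : ℕ) (j : ι) : empiricalFreq y t j ≤ 1 :=
  div_le_one_of_le₀ (mod_cast Nat.count_le (y · = j)) t.cast_nonneg

lemma mul_empiricalFreq {t : ℕ} (ht : t ≠ 0) (j : ι) :
    t * empiricalFreq y t j = Nat.count (y · = j) t :=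
  mul_div_cancel₀ _ (mod_cast ht)

variable [Fintype ι]

/-- Laplace's add-one estimate after `t` outcomes: the FTRL prediction for round `t + 1` in the
1-based numbering of rounds. -/
noncomputable def laplace (t : ℕ) (j : ι) : ℝ :=
  (Nat.count (y · = j) t + 1) / (t + Fintype.card ι)

lemma sum_count_mul (t : ℕ) (f : ι → ℝ) :
    ∑ j, (Nat.count (y · = j) t : ℝ) * f j = ∑ s ∈ range t, f (y s) := by
  rw [← sum_fiberwise (range t) y]
  refine sum_congr rfl fun j _ => ?_
  rw [Nat.count_eq_card_filter_range, ← nsmul_eq_mul, ← sum_const]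
  exact sum_congr rfl fun s hs => by rw [(mem_filter.1 hs).2]

lemma sum_count (t : ℕ) : ∑ j, (Nat.count (y · = j) t : ℝ) = t := by
  simpa using sum_count_mul y t fun _ => 1

lemma sum_comp_count {M : Type*} [AddCommMonoid M] (g : ℕ → M) (t : ℕ) :
    ∑ s ∈ range t, g (Nat.count (y · = y s) s) =
      ∑ j, ∑ k ∈ range (Nat.count (y · = j) t), g k := by
  induction t with
  | zero => simp
  | succ t ih =>
    have hstep (j : ι) : ∑ k ∈ range (Nat.count (y · = j) (t + 1)), g k =
        ∑ k ∈ range (Nat.count (y · = j) t), g k +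
          if y t = j then g (Nat.count (y · = j) t) else 0 := by
      rw [Nat.count_succ]
      split_ifs <;> simp [sum_range_succ]
    simp only [sum_range_succ _ t, ih, hstep, sum_add_distrib, sum_ite_eq, mem_univ, if_true]

lemma sum_empiricalFreq {t : ℕ} (ht : t ≠ 0) : ∑ j, empiricalFreq y t j = 1 := by
  unfold empiricalFreq
  rw [← sum_div, sum_count, div_self (mod_cast ht)]

lemma add_card_mul_laplace (t : ℕ) (j : ι) :
    (t + Fintype.card ι) * laplace y t j = Nat.count (y · = j) t + 1 := by
  have : Nonempty ι := ⟨j⟩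
  exact mul_div_cancel₀ _ (by positivity)

lemma laplace_pos (t : ℕ) (j : ι) : 0 < laplace y t j := by
  have : Nonempty ι := ⟨j⟩
  unfold laplace
  positivity

lemma sum_laplace (t : ℕ) : ∑ j, laplace y t j = 1 := by
  have : Nonempty ι := ⟨y 0⟩
  unfold laplace
  rw [← sum_div, sum_add_distrib, sum_count, sum_const, card_univ, nsmul_eq_mul, mul_one,
    div_self (by positivity)]

lemma laplace_zero (j : ι) : laplace y 0 j = (Fintype.card ι : ℝ)⁻¹ := by
  simp [laplace]

end Frequencies

section Stability

variable {a c N K : ℝ}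

lemma deformedLog_add_one_div_add_one_sub_le (ha₀ : 0 ≤ a) (ha₁ : a ≤ 1) (hc : 0 < c) (hN : 0 < N) :
    deformedLog a ((c + 1) / (N + 1)) - deformedLog a (c / N) ≤ (c / N) ^ a * c⁻¹ := by
  have hratio : (c + 1) / (N + 1) = c / N * ((c + 1) / (N + 1) / (c / N)) :=
    (mul_div_cancel₀ _ (by positivity)).symm
  have hle : (c + 1) / (N + 1) / (c / N) - 1 ≤ c⁻¹ :=
    calc (c + 1) / (N + 1) / (c / N) - 1 = c⁻¹ * ((N - c) / (N + 1)) := by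
          field_simp
          ring
      _ ≤ c⁻¹ * 1 := by
          gcongr
          exact (div_le_one (by positivity)).2 (by linarith)
      _ = c⁻¹ := mul_one _
  rw [hratio, deformedLog_mul a (by positivity) (by positivity), add_sub_cancel_left]
  gcongr
  exact (deformedLog_le_sub_one ha₀ ha₁ (by positivity)).trans hle

lemma rpow_div_mul_inv_le (ha₀ : 0 ≤ a) (ha₁ : a ≤ 1) (hc : 0 < c) (hN : 0 < N) (hK : 0 < K) :
    (c / N) ^ a * c⁻¹ ≤ K ^ (1 - a) * ((1 - a) * (K⁻¹ * c⁻¹) + a * N⁻¹) := by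
  have hfactor : (c / N) ^ a * c⁻¹ = K ^ (1 - a) * ((K⁻¹ * c⁻¹) ^ (1 - a) * N⁻¹ ^ a) :=
    calc (c / N) ^ a * c⁻¹ = (c⁻¹) ^ (1 - a) * N⁻¹ ^ a := by
          rw [div_eq_mul_inv, Real.mul_rpow hc.le (by positivity), Real.inv_rpow hc.le,
            Real.rpow_sub hc, Real.rpow_one, inv_div]
          ring
      _ = K ^ (1 - a) * ((K⁻¹ * c⁻¹) ^ (1 - a) * N⁻¹ ^ a) := by
          rw [← mul_assoc, ← Real.mul_rpow hK.le (by positivity), mul_inv_cancel_left₀ hK.ne']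
  rw [hfactor]
  gcongr
  exact Real.geom_mean_le_arith_mean2_weighted (by linarith) ha₀ (by positivity) (by positivity)
    (by ring)

variable {ι : Type*} [Fintype ι] [DecidableEq ι] (y : ℕ → ι)

lemma one_sub_inv_mul_laplace_le (t : ℕ) (j : ι) :
    (1 - ((t : ℝ) + Fintype.card ι + 1)⁻¹) * laplace y t j ≤ laplace y (t + 1) j := by
  have : Nonempty ι := ⟨j⟩
  calc (1 - ((t : ℝ) + Fintype.card ι + 1)⁻¹) * laplace y t j =
        (Nat.count (y · = j) t + 1) / (t + Fintype.card ι + 1) := by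
        rw [← add_card_mul_laplace]
        field_simp
        ring
    _ ≤ laplace y (t + 1) j := by
        unfold laplace
        push_cast
        rw [add_right_comm (t : ℝ) 1]
        gcongr
        exact t.le_succ

lemma score_laplace_sub_score_laplace_succ_le (ha₀ : 0 ≤ a) (ha₁ : a ≤ 1) (t : ℕ) :
    score a (laplace y t) (y t) - score a (laplace y (t + 1)) (y t) ≤
      2 * ((Fintype.card ι : ℝ) ^ (1 - a) *
        ((1 - a) * ((Fintype.card ι : ℝ)⁻¹ * ((Nat.count (y · = y t) t : ℝ) + 1)⁻¹) +
          a * ((t : ℝ) + 1)⁻¹) + ((t : ℝ) + 1)⁻¹) := by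
  have : Nonempty ι := ⟨y 0⟩
  have hK : (1 : ℝ) ≤ Fintype.card ι := mod_cast Fintype.card_pos (α := ι)
  set K : ℝ := (Fintype.card ι : ℝ)
  set c : ℝ := (Nat.count (y · = y t) t : ℝ) + 1 with hc
  have hpow : ∑ j, laplace y t j ^ (1 + a) - ∑ j, laplace y (t + 1) j ^ (1 + a) ≤
      (1 + a) * (t + K + 1)⁻¹ :=
    sum_rpow_sub_sum_rpow_le (by linarith) (by positivity)
      (inv_le_one_of_one_le₀ (by linarith [t.cast_nonneg (α := ℝ)]))
      (fun j => (laplace_pos y t j).le) (sum_laplace y t) (one_sub_inv_mul_laplace_le y t)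
  have hsucc : laplace y (t + 1) (y t) = (c + 1) / (t + K + 1) := by
    simp only [laplace, Nat.count_succ, if_true, hc]
    push_cast
    ring
  have hlog : deformedLog a (laplace y (t + 1) (y t)) - deformedLog a (laplace y t (y t)) ≤
      K ^ (1 - a) * ((1 - a) * (K⁻¹ * c⁻¹) + a * (t + K)⁻¹) := by
    rw [hsucc]
    exact (deformedLog_add_one_div_add_one_sub_le ha₀ ha₁ (by positivity) (by positivity)).trans
      (rpow_div_mul_inv_le ha₀ ha₁ (by positivity) (by positivity) (by positivity))
  calc score a (laplace y t) (y t) - score a (laplace y (t + 1)) (y t)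
      ≤ (1 + a) * (K ^ (1 - a) * ((1 - a) * (K⁻¹ * c⁻¹) + a * (t + K)⁻¹) + (t + K + 1)⁻¹) := by
        unfold score
        linarith [mul_le_mul_of_nonneg_left hlog (show 0 ≤ 1 + a by linarith)]
    _ ≤ 2 * (K ^ (1 - a) * ((1 - a) * (K⁻¹ * c⁻¹) + a * ((t : ℝ) + 1)⁻¹) + ((t : ℝ) + 1)⁻¹) := by
        gcongr <;> linarith

lemma sum_score_laplace_sub_score_laplace_succ_le (ha₀ : 0 ≤ a) (ha₁ : a ≤ 1) (T : ℕ) :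
    ∑ t ∈ range T, (score a (laplace y t) (y t) - score a (laplace y (t + 1)) (y t)) ≤
      4 * ((Fintype.card ι : ℝ) ^ (1 - a) * (1 + Real.log T)) := by
  have : Nonempty ι := ⟨y 0⟩
  have hK : (1 : ℝ) ≤ Fintype.card ι := mod_cast Fintype.card_pos (α := ι)
  set K : ℝ := (Fintype.card ι : ℝ) with hK_def
  have ha₁' : 0 ≤ 1 - a := sub_nonneg.2 ha₁
  have hKpow : 1 ≤ K ^ (1 - a) := Real.one_le_rpow hK ha₁'
  have hrounds : ∑ t ∈ range T, ((t : ℝ) + 1)⁻¹ ≤ 1 + Real.log T := sum_range_inv_add_one_le le_rfl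
  have hcounts : ∑ t ∈ range T, ((Nat.count (y · = y t) t : ℝ) + 1)⁻¹ ≤ K * (1 + Real.log T) := by
    rw [sum_comp_count y fun k : ℕ => ((k : ℝ) + 1)⁻¹, hK_def, ← nsmul_eq_mul, ← card_univ]
    exact sum_le_card_nsmul _ _ _ fun j _ => sum_range_inv_add_one_le (Nat.count_le _)
  calc ∑ t ∈ range T, (score a (laplace y t) (y t) - score a (laplace y (t + 1)) (y t))
      ≤ ∑ t ∈ range T, 2 * (K ^ (1 - a) *
          ((1 - a) * (K⁻¹ * ((Nat.count (y · = y t) t : ℝ) + 1)⁻¹) + a * ((t : ℝ) + 1)⁻¹) +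
            ((t : ℝ) + 1)⁻¹) :=
        sum_le_sum fun t _ => score_laplace_sub_score_laplace_succ_le y ha₀ ha₁ t
    _ = 2 * (K ^ (1 - a) *
          ((1 - a) * (K⁻¹ * ∑ t ∈ range T, ((Nat.count (y · = y t) t : ℝ) + 1)⁻¹) +
            a * ∑ t ∈ range T, ((t : ℝ) + 1)⁻¹) + ∑ t ∈ range T, ((t : ℝ) + 1)⁻¹) := by
        simp only [mul_sum, sum_add_distrib, mul_add]
    _ ≤ 2 * (K ^ (1 - a) * ((1 - a) * (K⁻¹ * (K * (1 + Real.log T))) + a * (1 + Real.log T)) +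
          (1 + Real.log T)) := by gcongr
    _ = 2 * (K ^ (1 - a) * (1 + Real.log T) + 1 * (1 + Real.log T)) := by
        rw [inv_mul_cancel_left₀ (by positivity)]
        ring
    _ ≤ 2 * (K ^ (1 - a) * (1 + Real.log T) + K ^ (1 - a) * (1 + Real.log T)) := by gcongr
    _ = 4 * (K ^ (1 - a) * (1 + Real.log T)) := by ring

end Stability

section Regret

variable {ι : Type*} [Fintype ι] [DecidableEq ι] (y : ℕ → ι) {a : ℝ} {T : ℕ}

/-- Properness of `score` thus makes `laplace y t` minimize the regularized cumulative loss. -/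
lemma sum_score_add_sum_score (a : ℝ) (p : ι → ℝ) (t : ℕ) :
    ∑ j, score a p j + ∑ s ∈ range t, score a p (y s) =
      (t + Fintype.card ι) * ∑ j, laplace y t j * score a p j := by
  simp_rw [mul_sum, ← mul_assoc, add_card_mul_laplace, add_mul, one_mul, sum_add_distrib,
    sum_count_mul y t (score a p)]
  ring

lemma sum_score_laplace_succ_le (ha : 0 ≤ a) (T : ℕ) :
    ∑ t ∈ range T, score a (laplace y (t + 1)) (y t) ≤
      ∑ _j : ι, deformedLog a (Fintype.card ι : ℝ)⁻¹ -
        ∑ j, ((Nat.count (y · = j) T : ℝ) + 1) * deformedLog a (laplace y T j) := by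
  have hoptimum (t : ℕ) :
      ∑ j, score a (laplace y t) j + ∑ s ∈ range t, score a (laplace y t) (y s) =
        -∑ j, ((Nat.count (y · = j) t : ℝ) + 1) * deformedLog a (laplace y t j) := by
    simp only [sum_score_add_sum_score, ← add_card_mul_laplace,
      sum_mul_score_self ha (fun j => (laplace_pos y t j).le) (sum_laplace y t), mul_neg,
      mul_sum, mul_assoc]
  have hleader := be_the_regularized_leader (fun p : ι → ℝ => ∑ j, score a p j)
    (fun s p => score a p (y s)) (laplace y) (fun t => by
      simp only [sum_score_add_sum_score]
      gcongr ?_ * ?_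
      exact score_proper ha (fun j => (laplace_pos y t j).le) (sum_laplace y t)
        (laplace_pos y (t + 1))) T
  have hstart := hoptimum 0
  simp only [range_zero, sum_empty, add_zero, Nat.count_zero, Nat.cast_zero, zero_add, one_mul,
    laplace_zero] at hstart
  rw [hoptimum, hstart] at hleader
  linarith

lemma sum_score_empiricalFreq (ha : 0 ≤ a) (hT : T ≠ 0) :
    ∑ s ∈ range T, score a (empiricalFreq y T) (y s) =
      -∑ j, (Nat.count (y · = j) T : ℝ) * deformedLog a (empiricalFreq y T j) := by
  simp only [← sum_count_mul, ← mul_empiricalFreq y hT, mul_assoc, ← mul_sum,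
    sum_mul_score_self ha (empiricalFreq_nonneg y T) (sum_empiricalFreq y hT), mul_neg]

lemma deformedLog_empiricalFreq_sub_le (ha : 0 ≤ a) {j : ι} (hn : 0 < Nat.count (y · = j) T) :
    deformedLog a (empiricalFreq y T j) - deformedLog a (laplace y T j) ≤ Fintype.card ι / T := by
  have hT : (0 : ℝ) < T := mod_cast hn.trans_le (Nat.count_le _)
  have : Nonempty ι := ⟨j⟩
  set K : ℝ := (Fintype.card ι : ℝ)
  have hfreq : 0 < empiricalFreq y T j := by unfold empiricalFreq; positivity
  have hshrink : empiricalFreq y T j * (T / (T + K)) ≤ laplace y T j := by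
    unfold empiricalFreq laplace
    rw [div_mul_div_cancel₀ hT.ne']
    gcongr
    linarith
  have hlog : Real.log (T / (T + K))⁻¹ ≤ K / T :=
    calc Real.log (T / (T + K))⁻¹ ≤ (T / (T + K))⁻¹ - 1 :=
          Real.log_le_sub_one_of_pos (by positivity)
      _ = K / T := by
          field_simp
          ring
  calc deformedLog a (empiricalFreq y T j) - deformedLog a (laplace y T j)
      ≤ deformedLog a (empiricalFreq y T j) -
          deformedLog a (empiricalFreq y T j * (T / (T + K))) := by
        gcongr
        exact deformedLog_le_deformedLog ha (by positivity) hshrink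
    _ ≤ empiricalFreq y T j ^ a * Real.log (T / (T + K))⁻¹ :=
        deformedLog_sub_deformedLog_mul_le ha hfreq (by positivity)
    _ ≤ empiricalFreq y T j ^ a * (K / T) := by gcongr
    _ ≤ K / T := mul_le_of_le_one_left (by positivity)
        (Real.rpow_le_one hfreq.le (empiricalFreq_le_one y T j) ha)

lemma count_mul_deformedLog_sub_le (ha : 0 ≤ a) (j : ι) :
    Nat.count (y · = j) T * (deformedLog a (empiricalFreq y T j) - deformedLog a (laplace y T j)) ≤
      Fintype.card ι * empiricalFreq y T j := by
  rcases Nat.eq_zero_or_pos (Nat.count (y · = j) T) with hn | hn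
  · simp [hn, empiricalFreq]
  · calc Nat.count (y · = j) T *
          (deformedLog a (empiricalFreq y T j) - deformedLog a (laplace y T j))
        ≤ Nat.count (y · = j) T * (Fintype.card ι / T) := by
          gcongr
          exact deformedLog_empiricalFreq_sub_le y ha hn
      _ = Fintype.card ι * empiricalFreq y T j := by
          unfold empiricalFreq
          ring

lemma deformedLog_inv_card_sub_le (ha : 0 ≤ a) (hT : T ≠ 0) (j : ι) :
    deformedLog a (Fintype.card ι : ℝ)⁻¹ - deformedLog a (laplace y T j) ≤
      (Fintype.card ι : ℝ)⁻¹ ^ a * (1 + Real.log T) := by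
  have hT₁ : (1 : ℝ) ≤ T := mod_cast Nat.one_le_iff_ne_zero.2 hT
  have : Nonempty ι := ⟨j⟩
  have hK : (1 : ℝ) ≤ Fintype.card ι := mod_cast Fintype.card_pos (α := ι)
  set K : ℝ := (Fintype.card ι : ℝ)
  have hshrink : K⁻¹ * (K / (T + K)) ≤ laplace y T j := by
    rw [inv_mul_eq_div, div_div_cancel_left' (by positivity), ← one_div]
    unfold laplace
    gcongr
    simp
  have hlog : Real.log (K / (T + K))⁻¹ ≤ 1 + Real.log T := by
    have hle : (K / (T + K))⁻¹ ≤ Real.exp 1 * T := by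
      rw [inv_div, div_le_iff₀ (by positivity)]
      calc T + K ≤ (1 + 1) * T * K := by
            linarith [mul_le_mul_of_nonneg_left hK T.cast_nonneg,
              mul_le_mul_of_nonneg_right hT₁ (zero_le_one.trans hK)]
        _ ≤ Real.exp 1 * T * K := by
            gcongr
            exact Real.add_one_le_exp 1
    calc Real.log (K / (T + K))⁻¹ ≤ Real.log (Real.exp 1 * T) :=
          Real.log_le_log (by positivity) hle
      _ = 1 + Real.log T := by rw [Real.log_mul (by positivity) (by positivity), Real.log_exp]
  calc deformedLog a K⁻¹ - deformedLog a (laplace y T j)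
      ≤ deformedLog a K⁻¹ - deformedLog a (K⁻¹ * (K / (T + K))) := by
        gcongr
        exact deformedLog_le_deformedLog ha (by positivity) hshrink
    _ ≤ K⁻¹ ^ a * Real.log (K / (T + K))⁻¹ :=
        deformedLog_sub_deformedLog_mul_le ha (by positivity) (by positivity)
    _ ≤ K⁻¹ ^ a * (1 + Real.log T) := by gcongr

lemma sum_score_laplace_succ_sub_sum_score_empiricalFreq_le (ha : 0 ≤ a) (hT : T ≠ 0) :
    ∑ t ∈ range T, score a (laplace y (t + 1)) (y t) -
        ∑ t ∈ range T, score a (empiricalFreq y T) (y t) ≤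
      Fintype.card ι + (Fintype.card ι : ℝ) ^ (1 - a) * (1 + Real.log T) := by
  have : Nonempty ι := ⟨y 0⟩
  set K : ℝ := (Fintype.card ι : ℝ) with hK_def
  have hKpow : K * K⁻¹ ^ a = K ^ (1 - a) := by
    rw [Real.rpow_sub (by positivity), Real.rpow_one, Real.inv_rpow (by positivity),
      div_eq_mul_inv]
  calc ∑ t ∈ range T, score a (laplace y (t + 1)) (y t) -
        ∑ t ∈ range T, score a (empiricalFreq y T) (y t)
      ≤ ∑ _j : ι, deformedLog a K⁻¹ -
            ∑ j, ((Nat.count (y · = j) T : ℝ) + 1) * deformedLog a (laplace y T j) -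
          -∑ j, (Nat.count (y · = j) T : ℝ) * deformedLog a (empiricalFreq y T j) := by
        rw [sum_score_empiricalFreq y ha hT]
        gcongr
        exact sum_score_laplace_succ_le y ha T
    _ = ∑ j, (Nat.count (y · = j) T *
            (deformedLog a (empiricalFreq y T j) - deformedLog a (laplace y T j)) +
          (deformedLog a K⁻¹ - deformedLog a (laplace y T j))) := by
        simp only [add_mul, mul_sub, one_mul, sum_add_distrib, sum_sub_distrib]
        ring
    _ ≤ ∑ j, (K * empiricalFreq y T j + K⁻¹ ^ a * (1 + Real.log T)) :=
        sum_le_sum fun j _ => add_le_add (count_mul_deformedLog_sub_le y ha j)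
          (deformedLog_inv_card_sub_le y ha hT j)
    _ = K + K ^ (1 - a) * (1 + Real.log T) := by
        rw [sum_add_distrib, ← mul_sum, sum_empiricalFreq y hT, mul_one, sum_const, card_univ,
          nsmul_eq_mul, ← hK_def, ← mul_assoc, hKpow]

theorem regret_score_laplace_le (ha₀ : 0 ≤ a) (ha₁ : a ≤ 1) (hT : T ≠ 0) :
    ∑ t ∈ range T, score a (laplace y t) (y t) - ∑ t ∈ range T, score a (empiricalFreq y T) (y t) ≤
      6 * (Fintype.card ι + (Fintype.card ι : ℝ) ^ (1 - a) * Real.log T) := by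
  have : Nonempty ι := ⟨y 0⟩
  have hK : (1 : ℝ) ≤ Fintype.card ι := mod_cast Fintype.card_pos (α := ι)
  have hKpow : (Fintype.card ι : ℝ) ^ (1 - a) ≤ Fintype.card ι :=
    Real.rpow_le_self_of_one_le hK (by linarith)
  have hlog : 0 ≤ (Fintype.card ι : ℝ) ^ (1 - a) * Real.log T := by positivity
  have hstability := sum_score_laplace_sub_score_laplace_succ_le y ha₀ ha₁ T
  have hleader := sum_score_laplace_succ_sub_sum_score_empiricalFreq_le y ha₀ hT
  rw [sum_sub_distrib] at hstability
  linarith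

end Regret

end TsallisRegret

open TsallisRegret in
theorem stmt7_general {d T : ℕ} {α : ℝ} {y : ℕ → Fin d} {p : ℕ → Fin d → ℝ} {pbar : Fin d → ℝ}
    (hT : 1 ≤ T) (hα₁ : 1 ≤ α) (hα₂ : α ≤ 2)
    (hp : ∀ t ∈ Finset.Icc 1 T, ∀ j : Fin d,
      p t j = ((((Finset.range (t - 1)).filter (fun s => y s = j)).card : ℝ) + 1)
                / ((t : ℝ) - 1 + (d : ℝ)))
    (hpbar : ∀ j : Fin d,
      pbar j = (((Finset.range T).filter (fun s => y s = j)).card : ℝ) / (T : ℝ)) :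
    ∑ s ∈ Finset.range T, tsallisLoss α (p (s + 1)) (y s)
        - ∑ s ∈ Finset.range T, tsallisLoss α pbar (y s)
      ≤ 6 * ((d : ℝ) + (d : ℝ) ^ ((2 : ℝ) - α) * Real.log T) := by
  have hT₀ : T ≠ 0 := Nat.one_le_iff_ne_zero.1 hT
  have hlaplace (s : ℕ) (hs : s ∈ Finset.range T) : p (s + 1) = laplace y s := by
    funext j
    rw [hp (s + 1) (Finset.mem_Icc.2 ⟨s.succ_pos, Finset.mem_range.1 hs⟩) j]
    simp [laplace, Nat.count_eq_card_filter_range]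
  have hempirical : pbar = empiricalFreq y T := by
    funext j
    rw [hpbar j, empiricalFreq, Nat.count_eq_card_filter_range]
  have hscore : ∑ s ∈ Finset.range T, tsallisLoss α (p (s + 1)) (y s) =
      ∑ s ∈ Finset.range T, score (α - 1) (laplace y s) (y s) :=
    Finset.sum_congr rfl fun s hs => by
      rw [hlaplace s hs, tsallisLoss_eq_score α (sum_laplace y s)]
  have hregret := regret_score_laplace_le y (sub_nonneg.2 hα₁) (by linarith) hT₀
  simp only [hscore, hempirical, tsallisLoss_eq_score α (sum_empiricalFreq y hT₀)]
  rwa [Fintype.card_fin, show 1 - (α - 1) = 2 - α by ring] at hregret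

/-- Theorem `tsallis-loss`: FTRL with loss-based regularization and `η = 1` has regret
`O(d + d^{2−α} log T)` for every unscaled α-Tsallis loss, `α ∈ [1, 2]`, simultaneously.
Rounds are 1-based: `y s` is the outcome of round `s+1`, `p t` is the prediction of
round `t ∈ {1, …, T}`, and `p̄_T` is the empirical outcome frequency. -/
theorem stmt7 : ∃ C : ℝ, 0 < C ∧
    ∀ (d T : ℕ) (α : ℝ) (y : ℕ → Fin d) (p : ℕ → Fin d → ℝ) (pbar : Fin d → ℝ),
      1 ≤ d → max d 2 ≤ T → 1 ≤ α → α ≤ 2 →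
      (∀ t ∈ Finset.Icc 1 T, ∀ j : Fin d,
          p t j = ((((Finset.range (t - 1)).filter (fun s => y s = j)).card : ℝ) + 1)
                    / ((t : ℝ) - 1 + (d : ℝ))) →
      (∀ j : Fin d, pbar j = (((Finset.range T).filter (fun s => y s = j)).card : ℝ) / (T : ℝ)) →
      ∑ s ∈ Finset.range T, tsallisLoss α (p (s + 1)) (y s)
          - ∑ s ∈ Finset.range T, tsallisLoss α pbar (y s)
        ≤ C * ((d : ℝ) + (d : ℝ) ^ ((2 : ℝ) - α) * Real.log T) :=
  ⟨6, by norm_num, fun d _ _ _ _ _ _ hT h₁ h₂ hp hpbar =>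
    stmt7_general (one_le_two.trans ((le_max_right d 2).trans hT)) h₁ h₂ hp hpbar⟩
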